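/- In a directed graph on 4 vertices where each vertex has out-degree at least 2 (each agent dominates at least 2 others), either there exist two vertices both dominating the same pair of other vertices, or there is a vertex dominated by all three others, or the domination relation contains a vertex v₃ that dominates both v₁ and v₂ while v₁ dominates v₃ (the configuration of Figure 3). -/

import Mathlib

/-- In a directed graph on 4 vertices without self-loops in which every vertex
dominates at least 2 others, either two vertices both dominate the same pair
of other vertices, or some vertex is dominated by all three others, or there
are vertices v₁, v₂, v₃ with v₃ dominating v₁ and v₂ while v₁ dominates v₃. -/
theorem double_domination_cases (D : Fin 4 → Fin 4 → Prop)
    (hirr : ∀ v, ¬ D v v)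
    (hout : ∀ u : Fin 4, ∃ v w : Fin 4, v ≠ w ∧ v ≠ u ∧ w ≠ u ∧ D u v ∧ D u w) :
    (∃ u v w x : Fin 4, u ≠ v ∧ w ≠ x ∧ w ≠ u ∧ w ≠ v ∧ x ≠ u ∧ x ≠ v ∧
      D u w ∧ D u x ∧ D v w ∧ D v x) ∨
    (∃ v : Fin 4, ∀ u : Fin 4, u ≠ v → D u v) ∨
    (∃ v₁ v₂ v₃ : Fin 4, v₁ ≠ v₂ ∧ v₁ ≠ v₃ ∧ v₂ ≠ v₃ ∧
      D v₃ v₁ ∧ D v₃ v₂ ∧ D v₁ v₃) := by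
  -- Four out-degrees of at least 2 give 8 arcs on 6 pairs, so some pair is joined both ways.
  right; right
  by_contra hno
  have anti : ∀ a b : Fin 4, D a b → ¬ D b a := by
    intro a b hab hba
    have hne : b ≠ a := by
      rintro rfl
      exact hirr _ hab
    obtain ⟨v, w, hvw, hva, hwa, hv, hw⟩ := hout a
    by_cases h : b = v
    · subst h
      exact hno ⟨b, w, a, hvw, hne, hwa, hab, hw, hba⟩
    · exact hno ⟨b, v, a, h, hne, hva, hab, hv, hba⟩
  -- Each vertex misses at most one of the other three.
  have two : ∀ u a b : Fin 4, a ≠ b → a ≠ u → b ≠ u → D u a ∨ D u b := by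
    intro u a b hab hau hbu
    obtain ⟨v, w, hvw, hvu, hwu, hv, hw⟩ := hout u
    have h : v = a ∨ v = b ∨ w = a ∨ w = b := by omega
    rcases h with rfl | rfl | rfl | rfl <;> tauto
  have p0 := two 0 1 2 (by decide) (by decide) (by decide)
  have q0 := two 0 1 3 (by decide) (by decide) (by decide)
  have r0 := two 0 2 3 (by decide) (by decide) (by decide)
  have p1 := two 1 0 2 (by decide) (by decide) (by decide)
  have q1 := two 1 0 3 (by decide) (by decide) (by decide)
  have r1 := two 1 2 3 (by decide) (by decide) (by decide)
  have p2 := two 2 0 1 (by decide) (by decide) (by decide)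
  have q2 := two 2 0 3 (by decide) (by decide) (by decide)
  have r2 := two 2 1 3 (by decide) (by decide) (by decide)
  have p3 := two 3 0 1 (by decide) (by decide) (by decide)
  have q3 := two 3 0 2 (by decide) (by decide) (by decide)
  have r3 := two 3 1 2 (by decide) (by decide) (by decide)
  have a01 := anti 0 1
  have a02 := anti 0 2
  have a03 := anti 0 3
  have a12 := anti 1 2
  have a13 := anti 1 3
  have a23 := anti 2 3
  clear anti two hno hout hirr
  grind
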